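/- arXiv:2310.07207 — 2 statements merged into one kernel-verified Lean document; each statement's English description precedes it below -/
import Mathlib

section
/- Approximation by the discounted fixed point, optimal case (Proposition 1 for T): for every γ ∈ (0,1), the operator T (with discount γ) has a unique fixed point V*_γ : S → ℝ, and for every x ∈ S, V*_γ(x) tends to V*(x) as γ tends to 1 from within (0,1). -/
/-- Closed-loop trajectory: `traj f π μ x t` is the state at time `t` starting from `x`. -/
def traj {S U A : Type*} (f : S → U → A → S) (π : S → U) (μ : S → A) (x : S) : ℕ → S
  | 0 => x
  | t + 1 =>
    let y := traj f π μ x t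
    f y (π y) (μ y)

/-- Safety value function for a protagonist policy `π` and an adversary policy `μ`. -/
noncomputable def Vpm {S U A : Type*} (f : S → U → A → S) (h : S → ℝ)
    (π : S → U) (μ : S → A) (x : S) : ℝ :=
  ⨅ t : ℕ, h (traj f π μ x t)

/-- Safety value function for a protagonist policy `π` (worst-case adversary). -/
noncomputable def Vp {S U A : Type*} (f : S → U → A → S) (h : S → ℝ)
    (π : S → U) (x : S) : ℝ :=
  ⨅ μ : S → A, Vpm f h π μ x

/-- Optimal safety value function. -/
noncomputable def Vstar {S U A : Type*} (f : S → U → A → S) (h : S → ℝ) (x : S) : ℝ :=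
  ⨆ π : S → U, Vp f h π x

/-- Safety self-consistency operator for fixed protagonist `π` and adversary `μ`. -/
noncomputable def Tpm {S U A : Type*} (γ : ℝ) (f : S → U → A → S) (h : S → ℝ)
    (π : S → U) (μ : S → A) (V : S → ℝ) (x : S) : ℝ :=
  (1 - γ) * h x + γ * min (h x) (V (f x (π x) (μ x)))

/-- Safety self-consistency operator for fixed protagonist `π` (worst-case adversary). -/
noncomputable def Tp {S U A : Type*} (γ : ℝ) (f : S → U → A → S) (h : S → ℝ)
    (π : S → U) (V : S → ℝ) (x : S) : ℝ :=
  (1 - γ) * h x + γ * min (h x) (⨅ a : A, V (f x (π x) a))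

/-- Optimal safety self-consistency operator. -/
noncomputable def Topt {S U A : Type*} (γ : ℝ) (f : S → U → A → S) (h : S → ℝ)
    (V : S → ℝ) (x : S) : ℝ :=
  (1 - γ) * h x + γ * min (h x) (⨆ u : U, ⨅ a : A, V (f x u a))

def reachN {S U A : Type*} (f : S → U → A → S) (π : S → U) (z : S) : ℕ → S → Prop
  | 0, y => y = z
  | n + 1, y => ∃ a, reachN f π z n (f y (π y) a)

theorem traj_shift {S U A : Type*} (f : S → U → A → S) (π : S → U) (μ : S → A) (x : S) (t : ℕ) :
    traj f π μ (f x (π x) (μ x)) t = traj f π μ x (t + 1) := by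
  induction t with
  | zero => rfl
  | succ t ih =>
    rw [traj, ih]
    rfl

theorem reachN_traj {S U A : Type*} (f : S → U → A → S) (π : S → U) (μ : S → A) (t : ℕ) (x : S) :
    reachN f π (traj f π μ x t) t x := by
  induction t generalizing x with
  | zero => rfl
  | succ t ih =>
    refine ⟨μ x, ?_⟩
    rw [← traj_shift]
    exact ih _

theorem exists_policy {S U A : Type*} [Nonempty A] (f : S → U → A → S) (π : S → U) (z : S) :
    ∃ μ : S → A, ∀ n y, reachN f π z n y → ∃ t, traj f π μ y t = z := by
  have key : ∀ y, ∃ a, ∀ n, reachN f π z (n + 1) y → (∀ k < n + 1, ¬ reachN f π z k y) →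
      reachN f π z n (f y (π y) a) := by
    intro y
    by_cases hy : ∃ n, reachN f π z (n + 1) y ∧ (∀ k < n + 1, ¬ reachN f π z k y)
    · obtain ⟨n, ⟨a, ha⟩, hn⟩ := hy
      refine ⟨a, fun m hm hm' => ?_⟩
      have h1 : ¬ (m + 1 < n + 1) := fun hlt => hn _ hlt hm
      have h2 : ¬ (n + 1 < m + 1) := fun hlt => hm' _ hlt ⟨a, ha⟩
      have : m = n := by omega
      subst this
      exact ha
    · exact ⟨Classical.arbitrary A, fun n h1 h2 => absurd ⟨n, h1, h2⟩ hy⟩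
  choose μ hμ using key
  refine ⟨μ, fun n => ?_⟩
  induction n using Nat.strong_induction_on with
  | _ n ih =>
    intro y hy
    by_cases hk : ∃ k < n, reachN f π z k y
    · obtain ⟨k, hk, hr⟩ := hk
      exact ih k hk y hr
    · push Not at hk
      cases n with
      | zero => exact ⟨0, hy⟩
      | succ n =>
        obtain ⟨t, ht⟩ := ih n (Nat.lt_succ_self n) _ (hμ y n hy hk)
        exact ⟨t + 1, by rw [← traj_shift]; exact ht⟩

theorem bddBelow_traj {S U A : Type*} [Finite S] (f : S → U → A → S) (h : S → ℝ)
    (π : S → U) (μ : S → A) (x : S) : BddBelow (Set.range fun t : ℕ => h (traj f π μ x t)) :=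
  (Set.finite_range h).bddBelow.mono (by rintro _ ⟨t, rfl⟩; exact ⟨_, rfl⟩)

theorem exists_time {S U A : Type*} [Finite S] (f : S → U → A → S) (h : S → ℝ)
    (π : S → U) (μ : S → A) (x : S) : ∃ t, h (traj f π μ x t) = Vpm f h π μ x := by
  have hfin : (Set.range fun t : ℕ => h (traj f π μ x t)).Finite :=
    (Set.finite_range h).subset (by rintro _ ⟨t, rfl⟩; exact ⟨_, rfl⟩)
  exact (Set.range_nonempty _).csInf_mem hfin

theorem Vp_le {S U A : Type*} [Finite S] [Finite A] (f : S → U → A → S) (h : S → ℝ)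
    (π : S → U) (μ : S → A) (x : S) (t : ℕ) : Vp f h π x ≤ h (traj f π μ x t) :=
  (ciInf_le (Set.finite_range _).bddBelow μ).trans (ciInf_le (bddBelow_traj f h π μ x) t)

theorem Vp_step {S U A : Type*} [Finite S] [Finite A] [Nonempty A] (f : S → U → A → S) (h : S → ℝ)
    (π : S → U) (x : S) (a : A) : Vp f h π x ≤ Vp f h π (f x (π x) a) := by
  refine le_ciInf fun μ => le_ciInf fun t => ?_
  obtain ⟨μ', hμ'⟩ := exists_policy f π (traj f π μ (f x (π x) a) t)
  obtain ⟨t', ht'⟩ := hμ' (t + 1) x ⟨a, reachN_traj f π μ t _⟩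
  rw [← ht']
  exact Vp_le f h π μ' x t'

theorem Vp_le_fixed {S U A : Type*} [Finite S] [Nonempty S] [Finite U] [Finite A] [Nonempty A]
    (f : S → U → A → S) (h : S → ℝ) (γ : ℝ) (hγ : γ ∈ Set.Ioo (0 : ℝ) 1) (W : S → ℝ)
    (hW : Topt γ f h W = W) (π : S → U) (x : S) : Vp f h π x ≤ W x := by
  obtain ⟨x0, hx0⟩ := Finite.exists_max fun y => Vp f h π y - W y
  obtain ⟨h0, h1⟩ := hγ
  suffices Vp f h π x0 - W x0 ≤ 0 by linarith [hx0 x]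
  by_contra! hδ
  set δ := Vp f h π x0 - W x0 with hδd
  have hh : Vp f h π x0 ≤ h x0 := Vp_le f h π (fun _ => Classical.arbitrary A) x0 0
  have hsup : Vp f h π x0 - δ ≤ ⨆ u : U, ⨅ a : A, W (f x0 u a) := by
    refine le_trans (le_ciInf fun a => ?_)
      (le_ciSup (f := fun u => ⨅ a : A, W (f x0 u a)) (Set.finite_range _).bddAbove (π x0))
    have := hx0 (f x0 (π x0) a)
    have := Vp_step f h π x0 a
    linarith
  have hmin : Vp f h π x0 - δ ≤ min (h x0) (⨆ u : U, ⨅ a : A, W (f x0 u a)) :=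
    le_min (by linarith) hsup
  have hw : (1 - γ) * h x0 + γ * min (h x0) (⨆ u : U, ⨅ a : A, W (f x0 u a)) = W x0 :=
    congrFun hW x0
  have e1 := mul_le_mul_of_nonneg_left hmin h0.le
  have e2 := mul_le_mul_of_nonneg_left hh (sub_nonneg.2 h1.le)
  nlinarith

theorem fixed_le {S U A : Type*} [Finite S] [Finite U] [Nonempty U] [Finite A]
    (f : S → U → A → S) (h : S → ℝ) (γ : ℝ) (hγ : γ ∈ Set.Ioo (0 : ℝ) 1) (W : S → ℝ)
    (hW : Topt γ f h W = W) (H : ℝ) (hH : ∀ x, h x ≤ H) :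
    ∃ π : S → U, ∀ (μ : S → A) (t : ℕ) (x : S),
      W x ≤ (1 - γ ^ t) * H + γ ^ t * h (traj f π μ x t) := by
  obtain ⟨h0, h1⟩ := hγ
  have : ∀ x, ∃ u, (⨅ a : A, W (f x u a)) = ⨆ u : U, ⨅ a : A, W (f x u a) := fun x =>
    exists_eq_ciSup_of_finite
  choose π hπ using this
  have hw : ∀ x, (1 - γ) * h x + γ * min (h x) (⨆ u : U, ⨅ a : A, W (f x u a)) = W x :=
    fun x => congrFun hW x
  refine ⟨π, fun μ t => ?_⟩
  induction t with
  | zero =>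
    intro x
    have := mul_le_mul_of_nonneg_left
      (min_le_left (h x) (⨆ u : U, ⨅ a : A, W (f x u a))) h0.le
    simp only [pow_zero, traj]
    linarith [hw x]
  | succ t ih =>
    intro x
    rw [← traj_shift]
    have e1 := ih (f x (π x) (μ x))
    have e2 : min (h x) (⨆ u : U, ⨅ a : A, W (f x u a)) ≤ W (f x (π x) (μ x)) := by
      rw [← hπ x]
      exact (min_le_right _ _).trans (ciInf_le (Set.finite_range _).bddBelow (μ x))
    have e3 := mul_le_mul_of_nonneg_left (e2.trans e1) h0.le
    have e4 := mul_le_mul_of_nonneg_left (hH x) (sub_nonneg.2 h1.le)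
    refine (((hw x).symm.le).trans (add_le_add e4 e3)).trans (le_of_eq ?_)
    ring

theorem Topt_le {S U A : Type*} [Finite U] [Nonempty U] [Finite A] [Nonempty A]
    (f : S → U → A → S) (h : S → ℝ) (γ : ℝ) (h0 : 0 ≤ γ) (V W : S → ℝ) (c : ℝ) (hc : 0 ≤ c)
    (hVW : ∀ x, V x ≤ W x + c) (x : S) : Topt γ f h V x ≤ Topt γ f h W x + γ * c := by
  have hs : (⨆ u : U, ⨅ a : A, V (f x u a)) ≤ (⨆ u : U, ⨅ a : A, W (f x u a)) + c := by
    refine ciSup_le fun u => ?_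
    have : (⨅ a : A, V (f x u a)) - c ≤ ⨅ a : A, W (f x u a) := by
      refine le_ciInf fun a => ?_
      have := ciInf_le (f := fun a => V (f x u a)) (Set.finite_range _).bddBelow a
      linarith [hVW (f x u a)]
    have := le_ciSup (f := fun u => ⨅ a : A, W (f x u a)) (Set.finite_range _).bddAbove u
    linarith
  have hm : min (h x) (⨆ u : U, ⨅ a : A, V (f x u a)) ≤
      min (h x) (⨆ u : U, ⨅ a : A, W (f x u a)) + c := by
    rw [← min_add_add_right]
    exact min_le_min (by linarith) hs
  have := mul_le_mul_of_nonneg_left hm h0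
  unfold Topt
  linarith

theorem Topt_contracting {S U A : Type*} [Fintype S] [Finite U] [Nonempty U] [Finite A] [Nonempty A]
    (f : S → U → A → S) (h : S → ℝ) (γ : ℝ) (hγ : γ ∈ Set.Ioo (0 : ℝ) 1) :
    ContractingWith ⟨γ, hγ.1.le⟩ (Topt γ f h) := by
  refine ⟨hγ.2, LipschitzWith.of_dist_le_mul fun V W => ?_⟩
  have hb : ∀ x, |V x - W x| ≤ dist V W := fun x => by
    rw [← Real.dist_eq]; exact dist_le_pi_dist V W x
  refine (dist_pi_le_iff (mul_nonneg hγ.1.le dist_nonneg)).2 fun x => ?_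
  rw [Real.dist_eq, abs_le]
  have e1 := Topt_le f h γ hγ.1.le V W _ dist_nonneg
    (fun x => by linarith [(abs_le.1 (hb x)).2]) x
  have e2 := Topt_le f h γ hγ.1.le W V _ dist_nonneg
    (fun x => by linarith [(abs_le.1 (hb x)).1]) x
  change -(γ * dist V W) ≤ _ ∧ _ ≤ γ * dist V W
  constructor <;> linarith

theorem discounted_approximation_optimal {S U A : Type*} [Fintype S] [Nonempty S] [Fintype U] [Nonempty U] [Fintype A] [Nonempty A]
    (f : S → U → A → S) (h : S → ℝ) :
    (∀ γ ∈ Set.Ioo (0 : ℝ) 1, ∃! W : S → ℝ, Topt γ f h W = W) ∧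
    (∀ Vγ : ℝ → S → ℝ, (∀ γ ∈ Set.Ioo (0 : ℝ) 1, Topt γ f h (Vγ γ) = Vγ γ) →
      ∀ x : S, Filter.Tendsto (fun γ => Vγ γ x) (nhdsWithin 1 (Set.Ioo (0 : ℝ) 1))
        (nhds (Vstar f h x))) := by
  refine ⟨fun γ hγ => ?_, fun Vγ hV x => ?_⟩
  · have hc := Topt_contracting f h γ hγ
    exact ⟨hc.fixedPoint, hc.fixedPoint_isFixedPt, fun W hW => hc.fixedPoint_unique hW⟩
  · obtain ⟨xM, hxM⟩ := Finite.exists_max h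
    obtain ⟨xm, hxm⟩ := Finite.exists_min h
    choose T hT using fun p : (S → U) × (S → A) => exists_time f h p.1 p.2 x
    obtain ⟨N, hN⟩ := (Set.finite_range T).bddAbove
    have hlow : ∀ γ ∈ Set.Ioo (0 : ℝ) 1, Vstar f h x ≤ Vγ γ x := fun γ hγ =>
      ciSup_le fun π => Vp_le_fixed f h γ hγ _ (hV γ hγ) π x
    have hup : ∀ γ ∈ Set.Ioo (0 : ℝ) 1,
        Vγ γ x ≤ Vstar f h x + (1 - γ ^ N) * (h xM - h xm) := by
      intro γ hγ
      obtain ⟨π, hπ⟩ := fixed_le f h γ hγ _ (hV γ hγ) (h xM) hxM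
      obtain ⟨μ, hμ⟩ := exists_eq_ciInf_of_finite (f := fun μ : S → A => Vpm f h π μ x)
      have e1 := hπ μ (T (π, μ)) x
      have e2 : h (traj f π μ x (T (π, μ))) ≤ Vstar f h x := by
        have e3 := hT (π, μ)
        simp only at e3 hμ
        rw [e3, hμ]
        exact le_ciSup (f := fun π => Vp f h π x) (Set.finite_range _).bddAbove π
      have e4 : γ ^ N ≤ γ ^ (T (π, μ)) :=
        pow_le_pow_of_le_one hγ.1.le hγ.2.le (hN ⟨_, rfl⟩)
      have e5 : γ ^ (T (π, μ)) ≤ 1 := pow_le_one₀ hγ.1.le hγ.2.le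
      have e6 := hxm (traj f π μ x (T (π, μ)))
      have e7 := hxM (traj f π μ x (T (π, μ)))
      have e8 : (1 - γ ^ (T (π, μ))) * (h xM - h (traj f π μ x (T (π, μ)))) ≤
          (1 - γ ^ N) * (h xM - h xm) := by
        apply mul_le_mul <;> linarith
      linarith
    have hlim : Filter.Tendsto (fun γ : ℝ => Vstar f h x + (1 - γ ^ N) * (h xM - h xm))
        (nhdsWithin 1 (Set.Ioo (0 : ℝ) 1)) (nhds (Vstar f h x)) := by
      have hc : Continuous fun γ : ℝ => Vstar f h x + (1 - γ ^ N) * (h xM - h xm) := by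
        fun_prop
      have := (hc.tendsto 1).mono_left (nhdsWithin_le_nhds (s := Set.Ioo (0 : ℝ) 1))
      simpa using this
    refine tendsto_of_tendsto_of_tendsto_of_le_of_le' tendsto_const_nhds hlim ?_ ?_
    · filter_upwards [self_mem_nhdsWithin] with γ hγ using hlow γ hγ
    · filter_upwards [self_mem_nhdsWithin] with γ hγ using hup γ hγ
end

section
/- Robust forward invariance of the robust invariant set: for every feedback policy π : S → U and every state x ∈ S with V^π(x) ≥ 0, one has h(x) ≥ 0 and, for every disturbance a ∈ A, V^π(f(x, π(x), a)) ≥ 0; that is, from any state of the robust invariant set S_r^π = { x | V^π(x) ≥ 0 }, the policy π keeps the next state inside S_r^π under every disturbance, and the current state is safe. -/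
theorem aux_traj_add {S U A : Type*} (f : S → U → A → S) (π : S → U) (μ : S → A) (x : S)
    (s r : ℕ) : traj f π μ x (s + r) = traj f π μ (traj f π μ x s) r := by
  induction r with
  | zero => rfl
  | succ r ih =>
    rw [← Nat.add_assoc, traj, traj, ih]

theorem aux_nonneg_iff {S U A : Type*} [Fintype S] [Fintype A] [Nonempty A]
    (f : S → U → A → S) (h : S → ℝ) (π : S → U) (x : S) :
    0 ≤ Vp f h π x ↔ ∀ μ t, 0 ≤ h (traj f π μ x t) := by
  have hb : ∀ μ, BddBelow (Set.range fun t : ℕ => h (traj f π μ x t)) := fun μ =>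
    ((Set.finite_range h).subset (by rintro _ ⟨t, rfl⟩; exact ⟨_, rfl⟩)).bddBelow
  have hb2 : BddBelow (Set.range fun μ : S → A => Vpm f h π μ x) :=
    (Set.finite_range _).bddBelow
  constructor
  · intro hx μ t
    exact hx.trans ((ciInf_le hb2 μ).trans (ciInf_le (hb μ) t))
  · intro H
    exact le_ciInf fun μ => le_ciInf fun t => H μ t

theorem robust_forward_invariance {S U A : Type*} [Fintype S] [Nonempty S] [Fintype U] [Nonempty U] [Fintype A] [Nonempty A]
    (f : S → U → A → S) (h : S → ℝ)
    (π : S → U) (x : S) (hx : 0 ≤ Vp f h π x) :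
    0 ≤ h x ∧ ∀ a : A, 0 ≤ Vp f h π (f x (π x) a) := by
  classical
  rw [aux_nonneg_iff] at hx
  refine ⟨hx (fun _ => Classical.arbitrary A) 0, fun a => ?_⟩
  rw [aux_nonneg_iff]
  intro μ t
  by_cases hs : ∃ s, s < t ∧ traj f π μ (f x (π x) a) s = x
  · obtain ⟨s, hst, hs⟩ := hs
    obtain ⟨r, rfl⟩ := Nat.exists_eq_add_of_le hst.le
    rw [aux_traj_add, hs]
    exact hx μ r
  · push Not at hs
    have key : ∀ k, k ≤ t →
        traj f π (Function.update μ x a) x (k + 1) = traj f π μ (f x (π x) a) k := by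
      intro k
      induction k with
      | zero => intro _; simp [traj]
      | succ k ih =>
        intro hk
        have h1 := ih (by omega)
        have h2 := hs k (by omega)
        rw [traj, h1]
        simp [traj, Function.update_of_ne h2]
    rw [← key t le_rfl]
    exact hx _ _
end
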